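/- arXiv:2206.04492 — 2 statements merged into one kernel-verified Lean document; each statement's English description precedes it below -/
import Mathlib

section
/- Let d' ≥ 1 and let Y : ℝ^{d'} → ℝ be a smooth Morse function (every critical point of Y is nondegenerate) which is bounded from below and satisfies |∇Y(x)| ≥ 1/C for |x| > C, for some constant C > 0. Let m and m' be two distinct local minima of Y. Then the set A = {a ∈ ℝ : m and m' lie in two different connected components of {Y < a}} is nonempty and bounded above, so σ := sup A is well defined; the open set {Y < σ} has at least two distinct connected components Ω ∋ m and Ω' ∋ m'; and there exists a connected component Ω'' of {Y < σ} with Ω'' ≠ Ω such that the closure of Ω meets the closure of Ω'', and every point of closure(Ω) ∩ closure(Ω'') is a nondegenerate critical point of Y of index 1 with critical value σ. -/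
/-- The Hessian of `Y` at `x`, as a continuous bilinear form. -/
noncomputable def hessianAt {E : Type*} [NormedAddCommGroup E] [NormedSpace ℝ E]
    (Y : E → ℝ) (x : E) : E →L[ℝ] E →L[ℝ] ℝ :=
  fderiv ℝ (fun y => fderiv ℝ Y y) x

/-- `x` is a nondegenerate critical point of `Y`. -/
def IsNondegenerateCriticalPt {E : Type*} [NormedAddCommGroup E] [NormedSpace ℝ E]
    (Y : E → ℝ) (x : E) : Prop :=
  fderiv ℝ Y x = 0 ∧ ∀ v : E, (∀ w : E, hessianAt Y x v w = 0) → v = 0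

/-- The Hessian of `Y` at `x` has index `k`: the maximal dimension of a subspace on which the
Hessian quadratic form is negative definite equals `k` (for a nondegenerate symmetric form
this is the number of negative eigenvalues counted with multiplicity). -/
def HasMorseIndex {E : Type*} [NormedAddCommGroup E] [NormedSpace ℝ E]
    (Y : E → ℝ) (x : E) (k : ℕ) : Prop :=
  (∃ W : Submodule ℝ E, Module.finrank ℝ W = k ∧
      ∀ v ∈ W, v ≠ 0 → hessianAt Y x v v < 0) ∧
  (∀ W : Submodule ℝ E, (∀ v ∈ W, v ≠ 0 → hessianAt Y x v v < 0) →
      Module.finrank ℝ W ≤ k)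

/-!
An argument in the style of Ekeland's variational principle shows that the sublevel sets of `Y` are
compact. The highest point of a path from `m` to `m'` bounds the separating levels; applied to a
path inside a component of `{Y < σ}`, it shows that their supremum `σ` still separates. Let `Ω` be
the component of `m` in `{Y < σ}`. If `closure Ω` did not meet the closure of the rest of
`{Y < σ}`, then `{Y ≤ σ}`, which has only finitely many other points (local minima), would split
into two disjoint compact sets, and `m` and `m'` would still be separated slightly above `σ`.

Near a point `z` where two components touch, `{Y < Y z}` is not contained in a single component.
It is near a noncritical point, because all nearby points can be moved down in a common direction;
near a local minimum, because it is empty; and near a critical point with at least two negative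
directions, because these form a connected sphere. This leaves the critical points of index one.
-/

open Set Filter Topology

section SublevelComponents

variable {X : Type*} [TopologicalSpace X]

theorem connectedComponentIn_eq_of_isPreconnected {S P : Set X} (hP : IsPreconnected P)
    (hPS : P ⊆ S) {p q : X} (hp : p ∈ P) (hq : q ∈ P) :
    connectedComponentIn S p = connectedComponentIn S q :=
  connectedComponentIn_eq (hP.subset_connectedComponentIn hp hPS hq)

theorem closure_connectedComponentIn_inter_subset (S : Set X) (p : X) :
    closure (connectedComponentIn S p) ∩ S ⊆ connectedComponentIn S p := by
  by_cases hp : p ∈ S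
  · have hconn : IsPreconnected (closure (connectedComponentIn S p) ∩ S) :=
      isPreconnected_connectedComponentIn.subset_closure
        (subset_inter subset_closure (connectedComponentIn_subset S p)) inter_subset_left
    exact hconn.subset_connectedComponentIn
      ⟨subset_closure (mem_connectedComponentIn hp), hp⟩ inter_subset_right
  · simp [connectedComponentIn_eq_empty hp]

theorem exists_mem_closure_connectedComponentIn {S : Set X}
    (hfin : (connectedComponentIn S '' S).Finite) {C : Set X} {z : X}
    (hz : z ∈ closure (S \ C)) :
    ∃ q ∈ S, connectedComponentIn S q ≠ C ∧ z ∈ closure (connectedComponentIn S q) := by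
  have hcover : S \ C ⊆ ⋃₀ {D ∈ connectedComponentIn S '' S | D ≠ C} := fun x hx =>
    ⟨_, ⟨⟨x, hx.1, rfl⟩, fun h => hx.2 (h ▸ mem_connectedComponentIn hx.1)⟩,
      mem_connectedComponentIn hx.1⟩
  have hz' := closure_mono hcover hz
  rw [(hfin.subset (sep_subset _ _)).closure_sUnion] at hz'
  obtain ⟨_, ⟨⟨q, hq, rfl⟩, hne⟩, hzq⟩ := mem_iUnion₂.1 hz'
  exact ⟨q, hq, hne, hzq⟩

/-- The connected component of `p` in the open sublevel set `{Y < a}`; it is empty when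
`a ≤ Y p`. -/
abbrev sublevelComponent (Y : X → ℝ) (a : ℝ) (p : X) : Set X :=
  connectedComponentIn {y | Y y < a} p

/-- The levels `a` for which `p` and `q` lie in two different components of `{Y < a}`. -/
abbrev separatingLevels (Y : X → ℝ) (p q : X) : Set ℝ :=
  {a | Y p < a ∧ Y q < a ∧ sublevelComponent Y a p ≠ sublevelComponent Y a q}

variable {Y : X → ℝ} {a c σ : ℝ} {p q z : X}

theorem lt_of_mem_sublevelComponent (hz : z ∈ sublevelComponent Y a p) : Y z < a :=
  connectedComponentIn_subset {y | Y y < a} p hz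

theorem le_of_mem_closure_sublevelComponent (hY : Continuous Y)
    (hz : z ∈ closure (sublevelComponent Y a p)) : Y z ≤ a :=
  closure_minimal (t := {y | Y y ≤ a}) (fun _ hx => (lt_of_mem_sublevelComponent hx).le)
    (isClosed_le hY continuous_const) hz

theorem eq_of_mem_closure_sublevelComponent_of_ne (hY : Continuous Y)
    (hpq : sublevelComponent Y a p ≠ sublevelComponent Y a q)
    (hzp : z ∈ closure (sublevelComponent Y a p)) (hzq : z ∈ closure (sublevelComponent Y a q)) :
    Y z = a := by
  refine (le_of_mem_closure_sublevelComponent hY hzp).eq_of_not_lt fun hza => hpq ?_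
  have hp := closure_connectedComponentIn_inter_subset _ _ ⟨hzp, hza⟩
  have hq := closure_connectedComponentIn_inter_subset _ _ ⟨hzq, hza⟩
  exact (connectedComponentIn_eq hp).trans (connectedComponentIn_eq hq).symm

theorem exists_forall_gt_sublevelComponent_eq (hY : Continuous Y) {S : Set X}
    (hpq : JoinedIn S p q) :
    ∃ x ∈ S, ∀ a, Y x < a → sublevelComponent Y a p = sublevelComponent Y a q := by
  obtain ⟨γ, hγ⟩ := hpq
  obtain ⟨_, ⟨t, rfl⟩, hmax⟩ :=
    (isCompact_range γ.continuous).exists_isMaxOn (range_nonempty γ) hY.continuousOn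
  exact ⟨γ t, hγ t, fun a ha => connectedComponentIn_eq_of_isPreconnected
    (isPreconnected_range γ.continuous) (fun y hy => (hmax hy).trans_lt ha)
    ⟨0, γ.source⟩ ⟨1, γ.target⟩⟩

theorem bddAbove_separatingLevels [PathConnectedSpace X] (hY : Continuous Y) (p q : X) :
    BddAbove (separatingLevels Y p q) := by
  obtain ⟨x, -, hx⟩ :=
    exists_forall_gt_sublevelComponent_eq hY (joinedIn_univ.2 (PathConnectedSpace.joined p q))
  exact ⟨Y x, fun a ha => not_lt.1 fun hxa => ha.2.2 (hx a hxa)⟩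

theorem csSup_mem_separatingLevels [LocallyPathConnectedSpace X] (hY : Continuous Y)
    (hne : (separatingLevels Y p q).Nonempty) (hbdd : BddAbove (separatingLevels Y p q)) :
    sSup (separatingLevels Y p q) ∈ separatingLevels Y p q := by
  set σ := sSup (separatingLevels Y p q)
  obtain ⟨a, ha⟩ := hne
  have hp : Y p < σ := ha.1.trans_le (le_csSup hbdd ha)
  have hq : Y q < σ := ha.2.1.trans_le (le_csSup hbdd ha)
  refine ⟨hp, hq, fun heq => ?_⟩
  have hopen : IsOpen (sublevelComponent Y σ p) :=
    (isOpen_lt hY continuous_const).connectedComponentIn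
  have hpath : IsPathConnected (sublevelComponent Y σ p) :=
    hopen.isConnected_iff_isPathConnected.1 (isConnected_connectedComponentIn_iff.2 hp)
  have hqp : q ∈ sublevelComponent Y σ p := heq ▸ mem_connectedComponentIn hq
  obtain ⟨x, hxp, hx⟩ := exists_forall_gt_sublevelComponent_eq hY
    (hpath.joinedIn p (mem_connectedComponentIn hp) q hqp)
  have hσx : σ ≤ Y x := csSup_le ⟨a, ha⟩ fun b hb => not_lt.1 fun hxb => hb.2.2 (hx b hxb)
  exact hσx.not_gt (lt_of_mem_sublevelComponent hxp)

theorem exists_gt_mem_separatingLevels [T2Space X] (hY : Continuous Y)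
    (hσc : σ < c) (hc : IsCompact {y | Y y ≤ c}) {K L : Set X} (hK : IsCompact K)
    (hL : IsCompact L) (hKL : Disjoint K L) (hcover : {y | Y y ≤ σ} ⊆ K ∪ L)
    (hpK : p ∈ K) (hqL : q ∈ L) (hp : Y p ≤ σ) (hq : Y q ≤ σ) :
    ∃ b ∈ separatingLevels Y p q, σ < b := by
  obtain ⟨U, V, hU, hV, hKU, hLV, hUV⟩ := SeparatedNhds.of_isCompact_isCompact hK hL hKL
  obtain ⟨b, hσb, hb⟩ := (hc.diff (hU.union hV)).exists_forall_le' (f := Y) (a := σ)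
    hY.continuousOn fun x hx => not_le.1 fun hxσ =>
      hx.2 (union_subset_union hKU hLV (hcover hxσ))
  have hσ : σ < min b c := lt_min hσb hσc
  have hsub : sublevelComponent Y (min b c) p ⊆ U ∪ V := fun x hx => by
    obtain ⟨hxb, hxc⟩ := lt_min_iff.1 (lt_of_mem_sublevelComponent hx)
    by_contra hxUV
    exact (hb x ⟨hxc.le, hxUV⟩).not_gt hxb
  have hpmem : p ∈ sublevelComponent Y (min b c) p := mem_connectedComponentIn (hp.trans_lt hσ)
  have hpU : sublevelComponent Y (min b c) p ⊆ U :=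
    isPreconnected_connectedComponentIn.subset_left_of_subset_union hU hV hUV hsub
      ⟨p, hpmem, hKU hpK⟩
  refine ⟨min b c, ⟨hp.trans_lt hσ, hq.trans_lt hσ, fun heq => ?_⟩, hσ⟩
  have hqmem : q ∈ sublevelComponent Y (min b c) p :=
    heq ▸ mem_connectedComponentIn (hq.trans_lt hσ)
  exact disjoint_left.1 hUV (hpU hqmem) (hLV hqL)

theorem separatingLevels_nonempty_of_eventually_lt [T2Space X] (hY : Continuous Y)
    (hpc : Y p < c) (hc : IsCompact {y | Y y ≤ c}) (hp : ∀ᶠ x in 𝓝[≠] p, Y p < Y x)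
    (hpq : p ≠ q) (hqp : Y q ≤ Y p) : (separatingLevels Y p q).Nonempty := by
  obtain ⟨U, hUlt, hU, hpU⟩ := eventually_nhds_iff.1 (eventually_nhdsWithin_iff.1 hp)
  have hcompact : IsCompact ({y | Y y ≤ Y p} \ U) :=
    hc.of_isClosed_subset ((isClosed_le hY continuous_const).sdiff hU)
      fun y hy => le_trans hy.1 hpc.le
  have hcover : {y | Y y ≤ Y p} ⊆ {p} ∪ {y | Y y ≤ Y p} \ U := fun y hy => by
    by_cases hyU : y ∈ U
    · exact .inl (by_contra fun hyp => (hUlt y hyU hyp).not_ge hy)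
    · exact .inr ⟨hy, hyU⟩
  obtain ⟨b, hb, -⟩ := exists_gt_mem_separatingLevels hY hpc hc isCompact_singleton hcompact
    (disjoint_singleton_left.2 fun h => h.2 hpU) hcover rfl
    ⟨hqp, fun hqU => (hUlt q hqU hpq.symm).not_ge hqp⟩ le_rfl hqp
  exact ⟨b, hb⟩

theorem separatingLevels_nonempty [T2Space X] (hY : Continuous Y)
    (hK : ∀ c, IsCompact {y | Y y ≤ c}) (hp : ∀ᶠ x in 𝓝[≠] p, Y p < Y x)
    (hq : ∀ᶠ x in 𝓝[≠] q, Y q < Y x) (hpq : p ≠ q) : (separatingLevels Y p q).Nonempty := by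
  rcases le_total (Y q) (Y p) with hle | hle
  · exact separatingLevels_nonempty_of_eventually_lt hY (lt_add_one _) (hK _) hp hpq hle
  · obtain ⟨a, hqa, hpa, hne⟩ :=
      separatingLevels_nonempty_of_eventually_lt hY (lt_add_one _) (hK _) hq hpq.symm hle
    exact ⟨a, hpa, hqa, hne.symm⟩

theorem exists_isLocalMin_mem_sublevelComponent [LocallyConnectedSpace X] (hY : Continuous Y)
    (hK : IsCompact {y | Y y ≤ a}) (hp : Y p < a) :
    ∃ x ∈ sublevelComponent Y a p, IsLocalMin Y x := by
  have hcompact : IsCompact (closure (sublevelComponent Y a p)) :=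
    hK.of_isClosed_subset isClosed_closure fun _ => le_of_mem_closure_sublevelComponent hY
  have hpmem : p ∈ closure (sublevelComponent Y a p) :=
    subset_closure (mem_connectedComponentIn hp)
  obtain ⟨x, hx, hmin⟩ := hcompact.exists_isMinOn ⟨p, hpmem⟩ hY.continuousOn
  have hxmem : x ∈ sublevelComponent Y a p :=
    closure_connectedComponentIn_inter_subset _ _ ⟨hx, (hmin hpmem).trans_lt hp⟩
  have hopen : IsOpen (sublevelComponent Y a p) :=
    (isOpen_lt hY continuous_const).connectedComponentIn
  exact ⟨x, hxmem, mem_of_superset (hopen.mem_nhds hxmem) fun y hy => hmin (subset_closure hy)⟩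

theorem finite_image_sublevelComponent [LocallyConnectedSpace X] (hY : Continuous Y)
    (hK : IsCompact {y | Y y ≤ a}) (hfin : {x | IsLocalMin Y x ∧ Y x ≤ a}.Finite) :
    (sublevelComponent Y a '' {y | Y y < a}).Finite := by
  refine (hfin.image (sublevelComponent Y a)).subset ?_
  rintro _ ⟨p, hp, rfl⟩
  obtain ⟨x, hxp, hx⟩ := exists_isLocalMin_mem_sublevelComponent hY hK hp
  exact ⟨x, ⟨hx, (lt_of_mem_sublevelComponent hxp).le⟩, (connectedComponentIn_eq hxp).symm⟩

theorem setOf_le_subset_closure_setOf_lt_union_isLocalMin (Y : X → ℝ) (a : ℝ) :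
    {y | Y y ≤ a} ⊆ closure {y | Y y < a} ∪ {x | IsLocalMin Y x ∧ Y x ≤ a} := by
  intro x hx
  by_cases hxcl : x ∈ closure {y | Y y < a}
  · exact .inl hxcl
  · refine .inr ⟨?_, hx⟩
    filter_upwards [isClosed_closure.isOpen_compl.mem_nhds hxcl] with y hy
    exact hx.trans (not_lt.1 fun hya => hy (subset_closure hya))

theorem closure_sublevelComponent_inter_closure_diff_nonempty [T2Space X] (hY : Continuous Y)
    (hσc : σ < c) (hc : IsCompact {y | Y y ≤ c}) (hfin : {x | IsLocalMin Y x ∧ Y x ≤ σ}.Finite)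
    (hσ : IsGreatest (separatingLevels Y p q) σ) :
    (closure (sublevelComponent Y σ p) ∩
      closure ({y | Y y < σ} \ sublevelComponent Y σ p)).Nonempty := by
  obtain ⟨⟨hp, hq, hne⟩, hmax⟩ := hσ
  set Ω := sublevelComponent Y σ p
  set R := closure ({y | Y y < σ} \ Ω)
  set M := {x | IsLocalMin Y x ∧ Y x ≤ σ}
  -- Otherwise `closure Ω` and `R ∪ M \ closure Ω` are disjoint compact sets covering `{Y ≤ σ}`, so
  -- `p` is still separated from `q` slightly above `σ`.
  by_contra! hdisj
  have hcompact {s : Set X} (hs : s ⊆ {y | Y y < σ}) : IsCompact (closure s) :=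
    hc.of_isClosed_subset isClosed_closure <|
      closure_minimal (fun _ hx => ((hs hx).trans hσc).le) (isClosed_le hY continuous_const)
  have hcover : {y | Y y ≤ σ} ⊆ closure Ω ∪ (R ∪ M \ closure Ω) := by
    refine (setOf_le_subset_closure_setOf_lt_union_isLocalMin Y σ).trans (union_subset ?_ ?_)
    · calc closure {y | Y y < σ} ⊆ closure (Ω ∪ {y | Y y < σ} \ Ω) :=
            closure_mono (by rw [union_sdiff_self]; exact subset_union_right)
        _ = closure Ω ∪ R := closure_union
        _ ⊆ _ := union_subset_union_right _ subset_union_left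
    · exact fun x hx => or_iff_not_imp_left.2 fun hxΩ => .inr ⟨hx, hxΩ⟩
  have hqR : q ∈ R := subset_closure ⟨hq, fun hqΩ => hne (connectedComponentIn_eq hqΩ)⟩
  obtain ⟨b, hb, hσb⟩ := exists_gt_mem_separatingLevels hY hσc hc
    (hcompact (connectedComponentIn_subset _ _))
    ((hcompact sdiff_subset).union (hfin.subset sdiff_subset).isCompact)
    ((disjoint_iff_inter_eq_empty.2 hdisj).union_right disjoint_sdiff_right) hcover
    (subset_closure (mem_connectedComponentIn hp)) (.inl hqR) hp.le hq.le
  exact (hmax hb).not_gt hσb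

theorem exists_sublevelComponent_ne_closure_inter_nonempty [T2Space X] [LocallyConnectedSpace X]
    (hY : Continuous Y) (hK : ∀ c, IsCompact {y | Y y ≤ c})
    (hfin : {x | IsLocalMin Y x ∧ Y x ≤ σ}.Finite)
    (hσ : IsGreatest (separatingLevels Y p q) σ) :
    ∃ r, Y r < σ ∧ sublevelComponent Y σ r ≠ sublevelComponent Y σ p ∧
      (closure (sublevelComponent Y σ p) ∩ closure (sublevelComponent Y σ r)).Nonempty := by
  obtain ⟨z, hzp, hz⟩ := closure_sublevelComponent_inter_closure_diff_nonempty hY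
    (lt_add_one σ) (hK _) hfin hσ
  obtain ⟨r, hr, hrp, hzr⟩ :=
    exists_mem_closure_connectedComponentIn (finite_image_sublevelComponent hY (hK σ) hfin) hz
  exact ⟨r, hr, hrp, z, hzp, hzr⟩

/-- Near `z`, the open sublevel set `{Y < Y z}` lies in a single one of its connected components.
This includes the case where it is empty near `z`, that is, where `z` is a local minimum. -/
def IsSublevelUnibranchAt (Y : X → ℝ) (z : X) : Prop :=
  ∃ Ω : Set X, ∀ᶠ x in 𝓝 z, Y x < Y z → sublevelComponent Y (Y z) x = Ω

theorem not_isSublevelUnibranchAt_of_mem_closure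
    (hpq : sublevelComponent Y (Y z) p ≠ sublevelComponent Y (Y z) q)
    (hzp : z ∈ closure (sublevelComponent Y (Y z) p))
    (hzq : z ∈ closure (sublevelComponent Y (Y z) q)) : ¬ IsSublevelUnibranchAt Y z := by
  rintro ⟨Ω, hΩ⟩
  have heq {p : X} (hzp : z ∈ closure (sublevelComponent Y (Y z) p)) :
      sublevelComponent Y (Y z) p = Ω := by
    obtain ⟨x, hxp, hx⟩ := ((mem_closure_iff_frequently.1 hzp).and_eventually hΩ).exists
    exact (connectedComponentIn_eq hxp).trans (hx (lt_of_mem_sublevelComponent hxp))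
  exact hpq ((heq hzp).trans (heq hzq).symm)

theorem isSublevelUnibranchAt_of_isLocalMin (hz : IsLocalMin Y z) : IsSublevelUnibranchAt Y z :=
  ⟨∅, hz.mono fun _ hzx hxz => absurd hxz hzx.not_gt⟩

end SublevelComponents

section LinearAlgebra

variable {E : Type*} [NormedAddCommGroup E] [NormedSpace ℝ E]

theorem exists_apply_neg_of_ne_zero {f : E →L[ℝ] ℝ} (hf : f ≠ 0) : ∃ v, f v < 0 := by
  obtain ⟨v, hv⟩ := DFunLike.ne_iff.1 hf
  rcases lt_or_gt_of_ne hv with h | h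
  · exact ⟨v, h⟩
  · exact ⟨-v, by simpa using h⟩

theorem apply_self_pos_of_symm_of_nonneg {B : E →L[ℝ] E →L[ℝ] ℝ} (hsymm : ∀ v w, B v w = B w v)
    (hnonneg : ∀ v, 0 ≤ B v v) (hnd : ∀ v, (∀ w, B v w = 0) → v = 0) {v : E} (hv : v ≠ 0) :
    0 < B v v := by
  refine (hnonneg v).lt_of_ne fun h0 => hv (hnd v fun w => ?_)
  have hcauchy := LinearMap.BilinForm.apply_sq_le_of_symm B.toBilinForm hnonneg ⟨hsymm⟩ v w
  have hsq : B v w ^ 2 ≤ 0 := hcauchy.trans_eq (mul_eq_zero_of_left h0.symm _)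
  exact pow_eq_zero_iff two_ne_zero |>.1 (hsq.antisymm (sq_nonneg _))

theorem eventually_forall_apply_self_neg {X : Type*} [TopologicalSpace X] {x₀ : X}
    {B : X → E →L[ℝ] E →L[ℝ] ℝ} (hB : ContinuousAt B x₀) {W : Submodule ℝ E}
    [FiniteDimensional ℝ W] (hneg : ∀ v ∈ W, v ≠ 0 → B x₀ v v < 0) :
    ∀ᶠ x in 𝓝 x₀, ∀ v ∈ W, v ≠ 0 → B x v v < 0 := by
  have hsphere : ∀ᶠ x in 𝓝 x₀, ∀ u ∈ Metric.sphere (0 : W) 1, B x u u < 0 := by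
    refine (isCompact_sphere (0 : W) 1).eventually_forall_of_forall_eventually fun u hu => ?_
    have hcont : ContinuousAt (fun y : X × W => B y.1 y.2 y.2) (x₀, u) := by fun_prop
    refine hcont.eventually_lt continuousAt_const (hneg u u.2 ?_)
    exact_mod_cast Metric.ne_of_mem_sphere hu one_ne_zero
  filter_upwards [hsphere] with x hx v hvW hv
  have hunit := hx (‖v‖⁻¹ • ⟨v, hvW⟩) (by simp [norm_smul, hv])
  have hscale : B x v v = ‖v‖ ^ 2 * B x (‖v‖⁻¹ • v) (‖v‖⁻¹ • v) := by
    simp only [map_smul, _root_.smul_apply, smul_eq_mul]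
    field_simp [norm_ne_zero_iff.2 hv]
  rw [hscale]
  exact mul_neg_of_pos_of_neg (by positivity) hunit

end LinearAlgebra

section Lines

variable {E F : Type*} [NormedAddCommGroup E] [NormedSpace ℝ E] [NormedAddCommGroup F]
  [NormedSpace ℝ F]

theorem hasDerivAt_comp_add_smul {f : E → F} {f' : E →L[ℝ] F} {x w : E} {t : ℝ}
    (hf : HasFDerivAt f f' (x + t • w)) : HasDerivAt (fun s : ℝ => f (x + s • w)) (f' w) t :=
  hf.comp_hasDerivAt t (by simpa using ((hasDerivAt_id t).smul_const w).const_add x)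

theorem exists_forall_add_smul_of_eventually {P : E → Prop} {z : E} (h : ∀ᶠ y in 𝓝 z, P y) :
    ∃ r > 0, ∀ x ∈ Metric.ball z r, ∀ w, ‖w‖ < r → ∀ t ∈ Icc (0 : ℝ) 1, P (x + t • w) := by
  obtain ⟨ε, hε, hP⟩ := Metric.eventually_nhds_iff_ball.1 h
  refine ⟨ε / 2, half_pos hε, fun x hx w hw t ht => hP _ ?_⟩
  have htw : ‖t • w‖ ≤ ‖w‖ := by
    rw [norm_smul, Real.norm_of_nonneg ht.1]
    exact mul_le_of_le_one_left (norm_nonneg w) ht.2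
  rw [mem_ball_iff_norm] at hx ⊢
  calc ‖x + t • w - z‖ = ‖(x - z) + t • w‖ := by congr 1; abel
    _ ≤ ‖x - z‖ + ‖t • w‖ := norm_add_le _ _
    _ < ε := by linarith

variable {Y : E → ℝ} {x w : E} {a : ℝ}

theorem segment_subset_setOf_lt_of_antitoneOn
    (hanti : AntitoneOn (fun t : ℝ => Y (x + t • w)) (Icc 0 1)) (hx : Y x < a) :
    segment ℝ x (x + w) ⊆ {y | Y y < a} := by
  rw [segment_eq_image', add_sub_cancel_left]
  rintro _ ⟨t, ht, rfl⟩
  have hle := hanti (left_mem_Icc.2 zero_le_one) ht ht.1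
  simp only [zero_smul, add_zero] at hle
  exact hle.trans_lt hx

theorem apply_add_lt_of_strictAntiOn
    (hanti : StrictAntiOn (fun t : ℝ => Y (x + t • w)) (Icc 0 1)) : Y (x + w) < Y x := by
  simpa using hanti (left_mem_Icc.2 zero_le_one) (right_mem_Icc.2 zero_le_one) zero_lt_one

theorem strictAntiOn_comp_add_smul_of_fderiv_neg (hY : Differentiable ℝ Y)
    (hneg : ∀ t ∈ Ioo (0 : ℝ) 1, fderiv ℝ Y (x + t • w) w < 0) :
    StrictAntiOn (fun t : ℝ => Y (x + t • w)) (Icc 0 1) := by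
  have hderiv (t : ℝ) := hasDerivAt_comp_add_smul (hY (x + t • w)).hasFDerivAt
  refine strictAntiOn_of_deriv_neg (convex_Icc 0 1)
    (fun t _ => (hderiv t).continuousAt.continuousWithinAt) fun t ht => ?_
  rw [interior_Icc] at ht
  rw [(hderiv t).deriv]
  exact hneg t ht

end Lines

section Hessian

variable {E : Type*} [NormedAddCommGroup E] [NormedSpace ℝ E] {Y : E → ℝ}

theorem hessianAt_neg (Y : E → ℝ) (x : E) : hessianAt (-Y) x = -hessianAt Y x := by
  simp only [hessianAt, fderiv_neg]
  exact fderiv_neg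

theorem continuous_hessianAt (hY : ContDiff ℝ 2 Y) : Continuous (hessianAt Y) :=
  (hY.fderiv_right (m := 1) (by norm_num)).continuous_fderiv (by norm_num)

theorem hasFDerivAt_fderiv_hessianAt (hY : ContDiff ℝ 2 Y) (x : E) :
    HasFDerivAt (fderiv ℝ Y) (hessianAt Y x) x :=
  ((hY.fderiv_right (m := 1) (by norm_num)).differentiable (by norm_num) x).hasFDerivAt

theorem hessianAt_symm (hY : ContDiff ℝ 2 Y) (x v w : E) :
    hessianAt Y x v w = hessianAt Y x w v :=
  hY.contDiffAt.isSymmSndFDerivAt (by simp) v w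

theorem strictAntiOn_comp_add_smul_of_hessianAt_neg (hY : ContDiff ℝ 2 Y) {x w : E}
    (hx : fderiv ℝ Y x w ≤ 0) (hneg : ∀ t ∈ Icc (0 : ℝ) 1, hessianAt Y (x + t • w) w w < 0) :
    StrictAntiOn (fun t : ℝ => Y (x + t • w)) (Icc 0 1) := by
  have hderiv (t : ℝ) : HasDerivAt (fun s : ℝ => fderiv ℝ Y (x + s • w) w)
      (hessianAt Y (x + t • w) w w) t := by
    simpa using (hasDerivAt_comp_add_smul (hasFDerivAt_fderiv_hessianAt hY _)).clm_apply
      (hasDerivAt_const t w)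
  have hanti : StrictAntiOn (fun t : ℝ => fderiv ℝ Y (x + t • w) w) (Icc 0 1) := by
    refine strictAntiOn_of_deriv_neg (convex_Icc 0 1)
      (fun t _ => (hderiv t).continuousAt.continuousWithinAt) fun t ht => ?_
    rw [(hderiv t).deriv]
    exact hneg t (interior_subset ht)
  refine strictAntiOn_comp_add_smul_of_fderiv_neg (hY.differentiable (by norm_num)) fun t ht => ?_
  have hlt := hanti (left_mem_Icc.2 zero_le_one) (Ioo_subset_Icc_self ht) ht.1
  simp only [zero_smul, add_zero] at hlt
  exact hlt.trans_le hx

theorem isLocalMax_of_hessianAt_neg [FiniteDimensional ℝ E] (hY : ContDiff ℝ 2 Y) {z : E}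
    (hz : fderiv ℝ Y z = 0) (hneg : ∀ v ≠ 0, hessianAt Y z v v < 0) : IsLocalMax Y z := by
  obtain ⟨r, hr, hball⟩ := exists_forall_add_smul_of_eventually
    (eventually_forall_apply_self_neg (continuous_hessianAt hY).continuousAt (W := ⊤)
      fun v _ hv => hneg v hv)
  filter_upwards [Metric.ball_mem_nhds z hr] with x hx
  obtain ⟨w, rfl⟩ : ∃ w, x = z + w := ⟨x - z, (add_sub_cancel z x).symm⟩
  rcases eq_or_ne w 0 with rfl | hw
  · simp
  · have hwr : ‖w‖ < r := by simpa using hx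
    refine (apply_add_lt_of_strictAntiOn <|
      strictAntiOn_comp_add_smul_of_hessianAt_neg hY (by simp [hz]) fun t ht => ?_).le
    exact hball z (Metric.mem_ball_self hr) w hwr t ht w Submodule.mem_top hw

theorem isLocalMin_of_hessianAt_pos [FiniteDimensional ℝ E] (hY : ContDiff ℝ 2 Y) {z : E}
    (hz : fderiv ℝ Y z = 0) (hpos : ∀ v ≠ 0, 0 < hessianAt Y z v v) : IsLocalMin Y z := by
  have hmax : IsLocalMax (-Y) z :=
    isLocalMax_of_hessianAt_neg (Y := -Y) hY.neg (by rw [fderiv_neg, hz, neg_zero])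
      fun v hv => by simpa [hessianAt_neg] using hpos v hv
  simpa using hmax.neg

theorem IsNondegenerateCriticalPt.isLocalMin_of_hessianAt_nonneg [FiniteDimensional ℝ E]
    (hY : ContDiff ℝ 2 Y) {z : E} (hz : IsNondegenerateCriticalPt Y z)
    (hnonneg : ∀ v, 0 ≤ hessianAt Y z v v) : IsLocalMin Y z :=
  isLocalMin_of_hessianAt_pos hY hz.1 fun _ =>
    apply_self_pos_of_symm_of_nonneg (hessianAt_symm hY z) hnonneg hz.2

end Hessian

section CriticalPoints

variable {E : Type*} [NormedAddCommGroup E] [NormedSpace ℝ E] [FiniteDimensional ℝ E] {Y : E → ℝ}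

theorem IsNondegenerateCriticalPt.eventually_fderiv_ne_zero (hY : ContDiff ℝ 2 Y) {z : E}
    (hz : IsNondegenerateCriticalPt Y z) : ∀ᶠ x in 𝓝[≠] z, fderiv ℝ Y x ≠ 0 := by
  have hker : (hessianAt Y z : E →ₗ[ℝ] E →L[ℝ] ℝ).ker = ⊥ :=
    LinearMap.ker_eq_bot'.2 fun v hv => hz.2 v fun w => DFunLike.congr_fun hv w
  obtain ⟨K, -, hK⟩ := LinearMap.exists_antilipschitzWith _ hker
  exact (hasFDerivAt_fderiv_hessianAt hY z).eventually_ne ⟨K, hK⟩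

theorem IsNondegenerateCriticalPt.eventually_lt_of_isLocalMin (hY : ContDiff ℝ 2 Y) {z : E}
    (hz : IsNondegenerateCriticalPt Y z) (hmin : IsLocalMin Y z) : ∀ᶠ x in 𝓝[≠] z, Y z < Y x := by
  filter_upwards [hz.eventually_fderiv_ne_zero hY, hmin.filter_mono nhdsWithin_le_nhds,
    hmin.eventually_nhds.filter_mono nhdsWithin_le_nhds] with x hx hzx hnear
  -- a point at the minimal level would be another local minimum, hence critical
  refine hzx.lt_of_ne fun heq => hx (IsLocalMin.fderiv_eq_zero ?_)
  filter_upwards [hnear] with y hy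
  exact heq ▸ hy

/-- A Morse function: all its critical points are nondegenerate. -/
def IsMorse {E : Type*} [NormedAddCommGroup E] [NormedSpace ℝ E] (Y : E → ℝ) : Prop :=
  ∀ x, fderiv ℝ Y x = 0 → IsNondegenerateCriticalPt Y x

theorem IsMorse.finite_inter_fderiv_eq_zero (hM : IsMorse Y) (hY : ContDiff ℝ 2 Y) {K : Set E}
    (hK : IsCompact K) : (K ∩ {x | fderiv ℝ Y x = 0}).Finite := by
  have hclosed : IsClosed {x | fderiv ℝ Y x = 0} :=
    isClosed_eq (hY.continuous_fderiv (by norm_num)) continuous_const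
  refine (hK.inter_right hclosed).finite ⟨discreteTopology_subtype_iff.2 fun x hx => ?_⟩
  rw [← disjoint_iff, disjoint_principal_right]
  filter_upwards [(hM x hx.2).eventually_fderiv_ne_zero hY] with y hy hyK
  exact hy hyK.2

theorem IsMorse.finite_isLocalMin (hM : IsMorse Y) (hY : ContDiff ℝ 2 Y) {a : ℝ}
    (hK : IsCompact {y | Y y ≤ a}) : {x | IsLocalMin Y x ∧ Y x ≤ a}.Finite :=
  (hM.finite_inter_fderiv_eq_zero hY hK).subset fun _ hx => ⟨hx.2, hx.1.fderiv_eq_zero⟩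

end CriticalPoints

section Unibranch

variable {E : Type*} [NormedAddCommGroup E] [NormedSpace ℝ E] {Y : E → ℝ} {z : E}

theorem isSublevelUnibranchAt_of_segment_subset (hY : Continuous Y) {K : Set E}
    (hK : IsCompact K) (hKconn : IsConnected K) (hlow : ∀ w ∈ K, Y (z + w) < Y z)
    (hseg : ∀ᶠ x in 𝓝 z, Y x < Y z → ∃ w ∈ K, segment ℝ x (x + w) ⊆ {y | Y y < Y z}) :
    IsSublevelUnibranchAt Y z := by
  have hlow_near : ∀ᶠ x in 𝓝 z, ∀ w ∈ K, Y (x + w) < Y z := by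
    refine hK.eventually_forall_of_forall_eventually fun w hw => ?_
    have hcont : Continuous fun y : E × E => Y (y.1 + y.2) := by fun_prop
    exact hcont.continuousAt.eventually_lt continuousAt_const (hlow w hw)
  obtain ⟨δ, hδ, hball⟩ := Metric.eventually_nhds_iff_ball.1 hlow_near
  -- every point of `{Y < Y z}` near `z` is joined within `{Y < Y z}` to the connected set `N`
  set N : Set E := (fun y : E × E => y.1 + y.2) '' Metric.ball z δ ×ˢ K
  have hNconn : IsPreconnected N :=
    ((convex_ball z δ).isPreconnected.prod hKconn.isPreconnected).image _ (by fun_prop)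
  have hNsub : N ⊆ {y | Y y < Y z} := by
    rintro _ ⟨⟨x, w⟩, ⟨hx, hw⟩, rfl⟩
    exact hball x hx w hw
  obtain ⟨w₀, hw₀⟩ := hKconn.nonempty
  refine ⟨sublevelComponent Y (Y z) (z + w₀), ?_⟩
  filter_upwards [hseg, Metric.ball_mem_nhds z hδ] with x hx hxball hxz
  obtain ⟨w, hw, hxw⟩ := hx hxz
  calc sublevelComponent Y (Y z) x = sublevelComponent Y (Y z) (x + w) :=
        connectedComponentIn_eq_of_isPreconnected (convex_segment _ _).isPreconnected hxw
          (left_mem_segment _ _ _) (right_mem_segment _ _ _)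
    _ = sublevelComponent Y (Y z) (z + w₀) :=
        connectedComponentIn_eq_of_isPreconnected hNconn hNsub ⟨(x, w), ⟨hxball, hw⟩, rfl⟩
          ⟨(z, w₀), ⟨Metric.mem_ball_self hδ, hw₀⟩, rfl⟩

theorem isSublevelUnibranchAt_of_fderiv_ne_zero (hY : ContDiff ℝ 1 Y) (hz : fderiv ℝ Y z ≠ 0) :
    IsSublevelUnibranchAt Y z := by
  obtain ⟨v, hv⟩ := exists_apply_neg_of_ne_zero hz
  have hcont : Continuous fun x => fderiv ℝ Y x v :=
    (hY.continuous_fderiv one_ne_zero).clm_apply continuous_const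
  obtain ⟨r, hr, hball⟩ := exists_forall_add_smul_of_eventually
    (hcont.continuousAt.eventually_lt continuousAt_const hv)
  obtain ⟨s, hs, hsv⟩ : ∃ s : ℝ, 0 < s ∧ ‖s • v‖ < r := by
    have hsmall : ∀ᶠ s : ℝ in 𝓝[>] 0, ‖s • v‖ < r :=
      ((by fun_prop : Continuous fun s : ℝ => ‖s • v‖).continuousAt.eventually_lt
        continuousAt_const (by simpa using hr)).filter_mono nhdsWithin_le_nhds
    exact (eventually_mem_nhdsWithin.and hsmall).exists
  have hanti : ∀ x ∈ Metric.ball z r,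
      StrictAntiOn (fun t : ℝ => Y (x + t • s • v)) (Icc 0 1) := fun x hx =>
    strictAntiOn_comp_add_smul_of_fderiv_neg (hY.differentiable one_ne_zero) fun t ht => by
      rw [map_smul, smul_eq_mul]
      exact mul_neg_of_pos_of_neg hs (hball x hx (s • v) hsv t (Ioo_subset_Icc_self ht))
  refine isSublevelUnibranchAt_of_segment_subset hY.continuous isCompact_singleton
    (isConnected_singleton (x := s • v)) ?_ ?_
  · rintro _ rfl
    exact apply_add_lt_of_strictAntiOn (hanti z (Metric.mem_ball_self hr))
  · filter_upwards [Metric.ball_mem_nhds z hr] with x hx hxz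
    exact ⟨s • v, rfl, segment_subset_setOf_lt_of_antitoneOn (hanti x hx).antitoneOn hxz⟩

/-- Along a negative direction `w` the function is concave, so from any nearby point it decreases
towards `w` or towards `-w`; the sphere of negative directions is symmetric, and connected because
its dimension is positive. -/
theorem isSublevelUnibranchAt_of_one_lt_finrank (hY : ContDiff ℝ 2 Y) (hz : fderiv ℝ Y z = 0)
    {W : Submodule ℝ E} (hW : 1 < Module.finrank ℝ W)
    (hneg : ∀ v ∈ W, v ≠ 0 → hessianAt Y z v v < 0) : IsSublevelUnibranchAt Y z := by
  have : FiniteDimensional ℝ W := .of_finrank_pos (zero_lt_one.trans hW)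
  obtain ⟨r, hr, hball⟩ := exists_forall_add_smul_of_eventually
    (eventually_forall_apply_self_neg (continuous_hessianAt hY).continuousAt hneg)
  have hanti : ∀ x ∈ Metric.ball z r, ∀ w ∈ Metric.sphere (0 : W) (r / 2), fderiv ℝ Y x w ≤ 0 →
      StrictAntiOn (fun t : ℝ => Y (x + t • (w : E))) (Icc 0 1) := fun x hx w hw hxw => by
    have hwr : ‖(w : E)‖ = r / 2 := mem_sphere_zero_iff_norm.1 hw
    have hw0 : (w : E) ≠ 0 := norm_pos_iff.1 (hwr ▸ half_pos hr)
    exact strictAntiOn_comp_add_smul_of_hessianAt_neg hY hxw fun t ht =>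
      hball x hx w (hwr ▸ half_lt_self hr) t ht w w.2 hw0
  have hrank : 1 < Module.rank ℝ W := by
    rw [← Module.finrank_eq_rank]
    exact_mod_cast hW
  have hsphere : IsConnected (Metric.sphere (0 : W) (r / 2)) :=
    isConnected_sphere hrank 0 (half_pos hr).le
  refine isSublevelUnibranchAt_of_segment_subset hY.continuous
    ((isCompact_sphere 0 (r / 2)).image continuous_subtype_val)
    (hsphere.image _ continuous_subtype_val.continuousOn) ?_ ?_
  · rintro _ ⟨w, hw, rfl⟩
    exact apply_add_lt_of_strictAntiOn (hanti z (Metric.mem_ball_self hr) w hw (by simp [hz]))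
  · filter_upwards [Metric.ball_mem_nhds z hr] with x hx hxz
    obtain ⟨w, hw, hxw⟩ : ∃ w ∈ Metric.sphere (0 : W) (r / 2), fderiv ℝ Y x w ≤ 0 := by
      obtain ⟨w, hw⟩ := hsphere.nonempty
      rcases le_total (fderiv ℝ Y x w) 0 with h | h
      · exact ⟨w, hw, h⟩
      · exact ⟨-w, by simpa using hw, by simpa using h⟩
    exact ⟨w, mem_image_of_mem _ hw,
      segment_subset_setOf_lt_of_antitoneOn (hanti x hx w hw hxw).antitoneOn hxz⟩

theorem hasMorseIndex_one_of_exists_of_forall {v : E} (hv : hessianAt Y z v v < 0)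
    (hle : ∀ W : Submodule ℝ E, (∀ v ∈ W, v ≠ 0 → hessianAt Y z v v < 0) →
      Module.finrank ℝ W ≤ 1) : HasMorseIndex Y z 1 := by
  have hv0 : v ≠ 0 := by
    rintro rfl
    simp at hv
  refine ⟨⟨Submodule.span ℝ {v}, finrank_span_singleton hv0, fun w hw hw0 => ?_⟩, hle⟩
  obtain ⟨c, rfl⟩ := Submodule.mem_span_singleton.1 hw
  have hc : c ≠ 0 := (smul_ne_zero_iff.1 hw0).1
  calc hessianAt Y z (c • v) (c • v) = c ^ 2 * hessianAt Y z v v := by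
        simp only [map_smul, _root_.smul_apply, smul_eq_mul]
        ring
    _ < 0 := mul_neg_of_pos_of_neg (by positivity) hv

theorem IsNondegenerateCriticalPt.hasMorseIndex_one_of_not_isSublevelUnibranchAt
    [FiniteDimensional ℝ E] (hY : ContDiff ℝ 2 Y) (hz : IsNondegenerateCriticalPt Y z)
    (hbranch : ¬ IsSublevelUnibranchAt Y z) : HasMorseIndex Y z 1 := by
  obtain ⟨v, hv⟩ : ∃ v, hessianAt Y z v v < 0 := by
    by_contra! hnonneg
    exact hbranch
      (isSublevelUnibranchAt_of_isLocalMin (hz.isLocalMin_of_hessianAt_nonneg hY hnonneg))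
  exact hasMorseIndex_one_of_exists_of_forall hv fun W hW => not_lt.1 fun hlt =>
    hbranch (isSublevelUnibranchAt_of_one_lt_finrank hY hz.1 hlt hW)

theorem IsMorse.hasMorseIndex_one_of_mem_closure [FiniteDimensional ℝ E] (hM : IsMorse Y)
    (hY : ContDiff ℝ 2 Y) {σ : ℝ} {p q : E}
    (hpq : sublevelComponent Y σ p ≠ sublevelComponent Y σ q)
    (hzp : z ∈ closure (sublevelComponent Y σ p)) (hzq : z ∈ closure (sublevelComponent Y σ q)) :
    IsNondegenerateCriticalPt Y z ∧ HasMorseIndex Y z 1 ∧ Y z = σ := by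
  obtain rfl := eq_of_mem_closure_sublevelComponent_of_ne hY.continuous hpq hzp hzq
  have hbranch := not_isSublevelUnibranchAt_of_mem_closure hpq hzp hzq
  have hcrit : fderiv ℝ Y z = 0 := by_contra fun h =>
    hbranch (isSublevelUnibranchAt_of_fderiv_ne_zero (hY.of_le (by norm_num)) h)
  exact ⟨hM z hcrit, (hM z hcrit).hasMorseIndex_one_of_not_isSublevelUnibranchAt hY hbranch, rfl⟩

end Unibranch

section Coercivity

variable {E : Type*} [NormedAddCommGroup E] [NormedSpace ℝ E]

theorem norm_le_of_eventually_sub_mul_norm_le {f : E → ℝ} {f' : E →L[ℝ] ℝ} {y : E} {K : ℝ}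
    (hf : HasFDerivAt f f' y) (hK : 0 ≤ K) (hle : ∀ᶠ x in 𝓝 y, f y - K * ‖x - y‖ ≤ f x) :
    ‖f'‖ ≤ K := by
  have hlower (v : E) : -(K * ‖v‖) ≤ f' v := by
    have hline : Tendsto (fun t : ℝ => y + t • v) (𝓝[>] 0) (𝓝 y) :=
      ((by fun_prop : Continuous fun t : ℝ => y + t • v).tendsto' 0 y (by simp)).mono_left
        nhdsWithin_le_nhds
    refine ge_of_tendsto (hf.hasLineDerivAt v).tendsto_slope_zero_right ?_
    filter_upwards [hline.eventually hle, self_mem_nhdsWithin] with t ht (ht0 : 0 < t)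
    rw [add_sub_cancel_left, norm_smul, Real.norm_of_nonneg ht0.le] at ht
    rw [smul_eq_mul, le_inv_mul_iff₀ ht0]
    linarith
  refine f'.opNorm_le_bound hK fun v => abs_le.2 ⟨hlower v, ?_⟩
  have hneg := hlower (-v)
  rw [norm_neg, map_neg] at hneg
  exact neg_le_neg_iff.1 hneg

/-- A form of Ekeland's variational principle; in a proper space the point is a minimizer of
`y ↦ Y y + ε * ‖y - x‖`. -/
theorem exists_norm_fderiv_le_and_mul_norm_sub_le [ProperSpace E] {Y : E → ℝ}
    (hY : Differentiable ℝ Y) {b ε : ℝ} (hb : ∀ y, b ≤ Y y) (hε : 0 < ε) (x : E) :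
    ∃ y, ‖fderiv ℝ Y y‖ ≤ ε ∧ ε * ‖y - x‖ ≤ Y x - b := by
  have hcont : Continuous fun y => Y y + ε * ‖y - x‖ := by
    have := hY.continuous
    fun_prop
  have hcoercive : Tendsto (fun y => Y y + ε * ‖y - x‖) (cocompact E) atTop := by
    have hdist : Tendsto (fun y => ‖y - x‖) (cocompact E) atTop := by
      simpa only [dist_eq_norm] using tendsto_dist_right_cocompact_atTop x
    exact tendsto_atTop_add_left_of_le _ b hb (hdist.const_mul_atTop hε)
  obtain ⟨y, hy⟩ := hcont.exists_forall_le hcoercive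
  refine ⟨y, ?_, ?_⟩
  · refine norm_le_of_eventually_sub_mul_norm_le (hY y).hasFDerivAt hε.le (.of_forall fun u => ?_)
    have htri : ‖u - x‖ ≤ ‖u - y‖ + ‖y - x‖ := norm_sub_le_norm_sub_add_norm_sub u y x
    nlinarith [hy u]
  · have hyx := hy x
    rw [sub_self, norm_zero, mul_zero, add_zero] at hyx
    linarith [hb y]

theorem isCompact_setOf_le_of_le_norm_fderiv [ProperSpace E] {Y : E → ℝ}
    (hY : Differentiable ℝ Y) (hbdd : BddBelow (range Y)) {R δ : ℝ} (hδ : 0 < δ)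
    (hgrad : ∀ x, R < ‖x‖ → δ ≤ ‖fderiv ℝ Y x‖) (a : ℝ) : IsCompact {x | Y x ≤ a} := by
  obtain ⟨b, hb⟩ := hbdd
  refine Metric.isCompact_of_isClosed_isBounded (isClosed_le hY.continuous continuous_const)
    ((Metric.isBounded_closedBall (x := (0 : E)) (r := R + (a - b) / (δ / 2))).subset
      fun x (hx : Y x ≤ a) => ?_)
  obtain ⟨y, hfderiv, hdist⟩ := exists_norm_fderiv_le_and_mul_norm_sub_le hY
    (fun y => hb (mem_range_self y)) (half_pos hδ) x
  have hyR : ‖y‖ ≤ R := not_lt.1 fun hlt =>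
    (half_lt_self hδ).not_ge ((hgrad y hlt).trans hfderiv)
  have hyx : ‖y - x‖ ≤ (a - b) / (δ / 2) := by
    rw [le_div_iff₀' (half_pos hδ)]
    linarith
  rw [mem_closedBall_zero_iff]
  calc ‖x‖ ≤ ‖y‖ + ‖y - x‖ := norm_le_norm_add_norm_sub _ _
    _ ≤ R + (a - b) / (δ / 2) := add_le_add hyR hyx

end Coercivity

theorem stmt_3_general {E : Type*} [NormedAddCommGroup E] [NormedSpace ℝ E]
    [FiniteDimensional ℝ E] {Y : E → ℝ} (hY : ContDiff ℝ 2 Y) (hM : IsMorse Y)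
    (hK : ∀ a, IsCompact {y | Y y ≤ a}) {m m' : E} (hmm' : m ≠ m')
    (hm : IsLocalMin Y m) (hm' : IsLocalMin Y m') :
    let σ := sSup (separatingLevels Y m m')
    (separatingLevels Y m m').Nonempty ∧ BddAbove (separatingLevels Y m m') ∧
    σ ∈ separatingLevels Y m m' ∧
    ∃ Ω : Set E, (∃ p, Y p < σ ∧ Ω = sublevelComponent Y σ p) ∧ Ω ≠ sublevelComponent Y σ m ∧
      (closure (sublevelComponent Y σ m) ∩ closure Ω).Nonempty ∧
      ∀ z ∈ closure (sublevelComponent Y σ m) ∩ closure Ω,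
        IsNondegenerateCriticalPt Y z ∧ HasMorseIndex Y z 1 ∧ Y z = σ := by
  intro σ
  have hstrict {x : E} (hx : IsLocalMin Y x) : ∀ᶠ y in 𝓝[≠] x, Y x < Y y :=
    (hM x hx.fderiv_eq_zero).eventually_lt_of_isLocalMin hY hx
  have hne := separatingLevels_nonempty hY.continuous hK (hstrict hm) (hstrict hm') hmm'
  have hbdd := bddAbove_separatingLevels hY.continuous m m'
  have hσ : IsGreatest (separatingLevels Y m m') σ :=
    ⟨csSup_mem_separatingLevels hY.continuous hne hbdd, fun _ => le_csSup hbdd⟩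
  obtain ⟨p, hp, hpm, hmeet⟩ := exists_sublevelComponent_ne_closure_inter_nonempty hY.continuous
    hK (hM.finite_isLocalMin hY (hK σ)) hσ
  exact ⟨hne, hbdd, hσ.1, _, ⟨p, hp, rfl⟩, hpm, hmeet, fun z hz =>
    hM.hasMorseIndex_one_of_mem_closure hY hpm.symm hz.1 hz.2⟩

/-- For a smooth Morse function `Y` bounded from below with `|∇Y| ≥ 1/C`
outside a compact set, and two distinct local minima `m ≠ m'`, the set
`A = {a | m, m' lie in two different connected components of {Y < a}}` is nonempty and
bounded above; with `σ = sup A`, the set `{Y < σ}` has two distinct connected components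
`Ω ∋ m` and `Ω' ∋ m'`; and there is a connected component `Ω'' ≠ Ω` of `{Y < σ}` whose
closure meets the closure of `Ω`, every point of the intersection being a nondegenerate
critical point of `Y` of index `1` with critical value `σ`. -/
theorem stmt_3 (d' : ℕ) (hd' : 1 ≤ d') (C : ℝ) (hC : 0 < C)
    (Y : EuclideanSpace ℝ (Fin d') → ℝ)
    (hY : ContDiff ℝ (⊤ : ℕ∞) Y)
    (hMorse : ∀ x, fderiv ℝ Y x = 0 → ∀ v, (∀ w, hessianAt Y x v w = 0) → v = 0)
    (hbdd : BddBelow (Set.range Y))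
    (hgrad : ∀ x : EuclideanSpace ℝ (Fin d'), C < ‖x‖ → 1 / C ≤ ‖gradient Y x‖)
    (m m' : EuclideanSpace ℝ (Fin d')) (hmm' : m ≠ m')
    (hm : IsLocalMin Y m) (hm' : IsLocalMin Y m') :
    let A : Set ℝ := {a | Y m < a ∧ Y m' < a ∧
      connectedComponentIn {y | Y y < a} m ≠ connectedComponentIn {y | Y y < a} m'}
    A.Nonempty ∧ BddAbove A ∧
    (Y m < sSup A ∧ Y m' < sSup A ∧
      connectedComponentIn {y | Y y < sSup A} m ≠ connectedComponentIn {y | Y y < sSup A} m') ∧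
    (∃ Ω'' : Set (EuclideanSpace ℝ (Fin d')),
      (∃ p, Y p < sSup A ∧ Ω'' = connectedComponentIn {y | Y y < sSup A} p) ∧
      Ω'' ≠ connectedComponentIn {y | Y y < sSup A} m ∧
      (closure (connectedComponentIn {y | Y y < sSup A} m) ∩ closure Ω'').Nonempty ∧
      (∀ z ∈ closure (connectedComponentIn {y | Y y < sSup A} m) ∩ closure Ω'',
        IsNondegenerateCriticalPt Y z ∧ HasMorseIndex Y z 1 ∧ Y z = sSup A)) := by
  have hfderiv : ∀ x, C < ‖x‖ → 1 / C ≤ ‖fderiv ℝ Y x‖ := by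
    simpa only [gradient, LinearIsometryEquiv.norm_map] using hgrad
  exact stmt_3_general (contDiff_infty.1 hY 2) (fun x hx => ⟨hx, hMorse x hx⟩)
    (isCompact_setOf_le_of_le_norm_fderiv (hY.differentiable (by simp)) hbdd (one_div_pos.2 hC)
      hfderiv) hmm' hm hm'
end

section
/- Let d' ≥ 1 and let Y : ℝ^{d'} → ℝ be a smooth function all of whose critical points are nondegenerate. Let X ∈ ℝ^{d'} and suppose there exists r₀ > 0 such that for every neighborhood U of X contained in the ball B(X, r₀), the set U ∩ {Y < Y(X)} is not connected. Then X is a (nondegenerate) critical point of Y of index 1. -/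
/-!
Where `Y` has nonzero derivative, the implicit function theorem straightens it to a linear
coordinate, whose strict sublevel sets meet small balls in convex sets.

At a nondegenerate critical point `X`, split the space as `N ⊕ Z` with the Hessian negative definite
on `N` and positive definite on `Z`. Near `X`, the function `Y` is strictly convex along the
translates of `Z`, is minimal at `X` on `X + Z` and is maximal at `X` on `X + N`. Hence
`{Y < Y X}` is a union of convex slices parallel to `Z`, none over the origin of `N` and each of
the others meeting `X + N`. So it is as connected as a punctured ball of `N`, which is
connected unless `dim N = 1`.
-/

open Filter Metric Set Topology

section LocallyPreconnectedBelow

/-- Arbitrarily small neighborhoods of `x` meet the strict sublevel set `{y | f y < f x}` in a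
preconnected, possibly empty, set; these neighborhoods need not be open. A Morse function violates
this only at its critical points of index `1`. -/
def LocallyPreconnectedBelow {α γ : Type*} [TopologicalSpace α] [LT γ] (f : α → γ) (x : α) :
    Prop :=
  ∀ V ∈ 𝓝 x, ∃ U ∈ 𝓝 x, U ⊆ V ∧ IsPreconnected (U ∩ {y | f y < f x})

theorem LocallyPreconnectedBelow.of_comp_symm {α β γ : Type*} [TopologicalSpace α]
    [TopologicalSpace β] [LT γ] {f : α → γ} {x : α} (φ : OpenPartialHomeomorph α β)
    (hx : x ∈ φ.source) (h : LocallyPreconnectedBelow (f ∘ φ.symm) (φ x)) :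
    LocallyPreconnectedBelow f x := by
  intro V hV
  have hV' : φ.target ∩ φ.symm ⁻¹' V ∈ 𝓝 (φ x) :=
    inter_mem (φ.open_target.mem_nhds (φ.map_source hx)) (φ.tendsto_symm hx hV)
  obtain ⟨U, hU, hUV, hconn⟩ := h _ hV'
  refine ⟨φ.symm '' U, ?_, image_subset_iff.2 fun y hy => (hUV hy).2, ?_⟩
  · simpa only [φ.left_inv hx] using φ.symm.image_mem_nhds (φ.map_source hx) hU
  · have hlevel : U ∩ {y | (f ∘ φ.symm) y < (f ∘ φ.symm) (φ x)}
        = U ∩ φ.symm ⁻¹' {y | f y < f x} := by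
      simp only [Function.comp_apply, φ.left_inv hx, preimage_ofPred_eq]
    rw [← image_inter_preimage, ← hlevel]
    exact hconn.image _ (φ.continuousOn_symm.mono fun y hy => (hUV hy.1).1)

variable {E : Type*} [AddCommGroup E] [Module ℝ E] [TopologicalSpace E]
  [IsTopologicalAddGroup E] [ContinuousSMul ℝ E]

theorem locallyPreconnectedBelow_of_quasiconvexOn [LocallyConvexSpace ℝ E] {γ : Type*}
    [LinearOrder γ] {f : E → γ} {s : Set E} {x : E} (hs : s ∈ 𝓝 x) (hf : QuasiconvexOn ℝ s f) :
    LocallyPreconnectedBelow f x := by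
  intro V hV
  obtain ⟨U, ⟨hU, hUconv⟩, hUsub⟩ :=
    (LocallyConvexSpace.convex_basis (𝕜 := ℝ) x).mem_iff.1 (inter_mem hs hV)
  have hUs : U ⊆ s := fun y hy => (hUsub hy).1
  have hfU : QuasiconvexOn ℝ U f := hUconv.quasiconvexOn_restrict hf hUs
  exact ⟨U, hU, fun y hy => (hUsub hy).2, (hfU.convex_lt _).isPreconnected⟩

theorem isPreconnected_prod_inter_lt {N γ : Type*} [TopologicalSpace N] [LinearOrder γ]
    {f : N × E → γ} {A : Set N} {C : Set E} {a₀ : N} {b₀ : E} (hb₀ : b₀ ∈ C)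
    (hA : IsPreconnected (A \ {a₀}))
    (hslice : ∀ a ∈ A, QuasiconvexOn ℝ C fun b => f (a, b))
    (hlt : ∀ a ∈ A, a ≠ a₀ → f (a, b₀) < f (a₀, b₀))
    (hle : ∀ b ∈ C, f (a₀, b₀) ≤ f (a₀, b)) :
    IsPreconnected ((A ×ˢ C) ∩ {p | f p < f (a₀, b₀)}) := by
  set S := (A ×ˢ C) ∩ {p | f p < f (a₀, b₀)}
  have fst_mem : ∀ p ∈ S, p.1 ∈ A \ {a₀} := by
    rintro ⟨a, b⟩ ⟨⟨ha, hb⟩, hab⟩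
    refine ⟨ha, ?_⟩
    rintro rfl
    exact (hle b hb).not_gt hab
  have spine_sub : (A \ {a₀}) ×ˢ {b₀} ⊆ S := by
    rintro ⟨a, b⟩ ⟨⟨ha, ha₀⟩, rfl⟩
    exact ⟨⟨ha, hb₀⟩, hlt a ha ha₀⟩
  obtain hempty | ⟨⟨a₁, b₁⟩, h₁⟩ := S.eq_empty_or_nonempty
  · exact hempty ▸ isPreconnected_empty
  have ha₁ := fst_mem _ h₁
  refine isPreconnected_of_forall (a₁, b₀) ?_
  rintro ⟨a, b⟩ hab
  have ha := fst_mem _ hab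
  let slice := Prod.mk a '' (C ∩ {b | f (a, b) < f (a₀, b₀)})
  have slice_conn : IsPreconnected slice :=
    ((hslice a ha.1).convex_lt _).isPreconnected.image _ (by fun_prop)
  have slice_sub : slice ⊆ S := by
    rintro _ ⟨c, ⟨hc, hac⟩, rfl⟩
    exact ⟨⟨ha.1, hc⟩, hac⟩
  refine ⟨(A \ {a₀}) ×ˢ {b₀} ∪ slice, union_subset spine_sub slice_sub,
    Or.inl ⟨ha₁, rfl⟩, Or.inr ⟨b, ⟨hab.1.2, hab.2⟩, rfl⟩, ?_⟩
  exact (hA.prod isPreconnected_singleton).union (a, b₀) ⟨ha, rfl⟩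
    ⟨b₀, ⟨hb₀, hlt a ha.1 ha.2⟩, rfl⟩ slice_conn

theorem isPreconnected_ball_sdiff_singleton {E : Type*} [SeminormedAddCommGroup E]
    [NormedSpace ℝ E] (hE : Module.rank ℝ E ≠ 1) (c : E) (r : ℝ) :
    IsPreconnected (ball c r \ {c}) := by
  obtain hrank | hrank := hE.lt_or_gt
  · have : Subsingleton E := rank_zero_iff.1 (Cardinal.lt_one_iff.1 hrank)
    exact subsingleton_of_subsingleton.isPreconnected
  obtain hr | hr := le_or_gt r 0
  · simpa only [ball_eq_empty.2 hr, empty_sdiff] using isPreconnected_empty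
  let φ : OpenPartialHomeomorph E E := OpenPartialHomeomorph.univBall c r
  have hsource : φ.source = univ := OpenPartialHomeomorph.univBall_source c r
  have himage : φ '' {0}ᶜ = ball c r \ {c} := by
    rw [compl_eq_univ_sdiff, ← hsource, φ.injOn.image_sdiff, φ.image_source_eq_target,
      OpenPartialHomeomorph.univBall_target c hr, hsource, univ_inter, image_singleton,
      OpenPartialHomeomorph.univBall_apply_zero]
  rw [← himage]
  exact (isConnected_compl_singleton_of_one_lt_rank hrank 0).isPreconnected.image _
    (φ.continuousOn.mono (hsource ▸ subset_univ _))

theorem locallyPreconnectedBelow_of_saddle {N Z γ : Type*} [SeminormedAddCommGroup N]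
    [NormedSpace ℝ N] [SeminormedAddCommGroup Z] [NormedSpace ℝ Z] [LinearOrder γ] {f : N × Z → γ}
    {a₀ : N} {b₀ : Z} (hN : Module.rank ℝ N ≠ 1) {A : Set N} {C : Set Z} (hA : A ∈ 𝓝 a₀)
    (hC : C ∈ 𝓝 b₀) (hslice : ∀ a ∈ A, QuasiconvexOn ℝ C fun b => f (a, b))
    (hlt : ∀ᶠ a in 𝓝[≠] a₀, f (a, b₀) < f (a₀, b₀))
    (hle : ∀ᶠ b in 𝓝 b₀, f (a₀, b₀) ≤ f (a₀, b)) :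
    LocallyPreconnectedBelow f (a₀, b₀) := by
  intro V hV
  have hgood : (A ∩ {a | a ≠ a₀ → f (a, b₀) < f (a₀, b₀)}) ×ˢ
      (C ∩ {b | f (a₀, b₀) ≤ f (a₀, b)}) ∈ 𝓝 (a₀, b₀) :=
    prod_mem_nhds (inter_mem hA (eventually_nhdsWithin_iff.1 hlt)) (inter_mem hC hle)
  obtain ⟨r, hr, hball⟩ := nhds_basis_ball.mem_iff.1 (inter_mem hgood hV)
  rw [← ball_prod_same] at hball
  have hballA : ∀ a ∈ ball a₀ r, a ∈ A ∧ (a ≠ a₀ → f (a, b₀) < f (a₀, b₀)) := fun a ha =>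
    (hball (mk_mem_prod ha (mem_ball_self hr))).1.1
  have hballC : ∀ b ∈ ball b₀ r, b ∈ C ∧ f (a₀, b₀) ≤ f (a₀, b) := fun b hb =>
    (hball (mk_mem_prod (mem_ball_self hr) hb)).1.2
  refine ⟨ball a₀ r ×ˢ ball b₀ r, prod_mem_nhds (ball_mem_nhds _ hr) (ball_mem_nhds _ hr),
    fun p hp => (hball hp).2, ?_⟩
  exact isPreconnected_prod_inter_lt (mem_ball_self hr)
    (isPreconnected_ball_sdiff_singleton hN a₀ r)
    (fun a ha => (convex_ball b₀ r).quasiconvexOn_restrict (hslice a (hballA a ha).1)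
      fun b hb => (hballC b hb).1)
    (fun a ha => (hballA a ha).2) fun b hb => (hballC b hb).2

end LocallyPreconnectedBelow

section Noncritical

theorem locallyPreconnectedBelow_of_hasStrictFDerivAt_ne_zero {E : Type*}
    [NormedAddCommGroup E] [NormedSpace ℝ E] [CompleteSpace E] {Y : E → ℝ} {Y' : E →L[ℝ] ℝ}
    {x : E} (hY : HasStrictFDerivAt Y Y' x) (hY' : Y' ≠ 0) :
    LocallyPreconnectedBelow Y x := by
  have hrange : Y'.range = ⊤ := LinearMap.range_eq_top_of_surjective _ <|
    LinearMap.surjective <| by exact_mod_cast hY'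
  let φ := hY.implicitToOpenPartialHomeomorph Y Y' hrange
  have hx : x ∈ φ.source := hY.mem_implicitToOpenPartialHomeomorph_source hrange
  have hstraight : EqOn Prod.fst (Y ∘ φ.symm) φ.target := fun p hp => by
    rw [Function.comp_apply, ← hY.implicitToOpenPartialHomeomorph_fst hrange]
    exact (congrArg Prod.fst (φ.right_inv hp)).symm
  obtain ⟨r, hr, hball⟩ := Metric.mem_nhds_iff.1 (φ.open_target.mem_nhds (φ.map_source hx))
  refine .of_comp_symm φ hx (locallyPreconnectedBelow_of_quasiconvexOn (ball_mem_nhds _ hr) ?_)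
  have hfst : ConvexOn ℝ (ball (φ x) r) (Prod.fst : ℝ × Y'.ker → ℝ) :=
    (LinearMap.fst ℝ ℝ Y'.ker).convexOn (convex_ball _ _)
  exact (hfst.congr (hstraight.mono hball)).quasiconvexOn

end Noncritical

section Hessian

variable {E : Type*} [NormedAddCommGroup E] [NormedSpace ℝ E] {Y : E → ℝ} {x : E}

/-- The Hessian of `Y` at `x` as the quadratic form `v ↦ D²Y(x)(v, v)`, without a factor `1 / 2`,
so that signatures of quadratic forms apply to it. -/
noncomputable def hessianQuadraticForm (Y : E → ℝ) (x : E) : QuadraticForm ℝ E :=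
  (hessianAt Y x).toBilinForm.toQuadraticMap

theorem hessianQuadraticForm_neg :
    hessianQuadraticForm (-Y) x = -hessianQuadraticForm Y x := by
  have hneg : (fun y => fderiv ℝ (-Y) y) = -fun y => fderiv ℝ Y y := funext fun y => fderiv_neg
  have hess_neg : hessianAt (-Y) x = -hessianAt Y x := by
    rw [hessianAt, hneg, fderiv_neg, hessianAt]
  ext v
  exact congrArg (fun B => B v v) hess_neg

theorem continuousAt_hessianAt (hY : ContDiffAt ℝ 2 Y x) : ContinuousAt (hessianAt Y) x :=
  ((hY.fderiv_right (m := 1) le_rfl).fderiv_right (m := 0) (by norm_num)).continuousAt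

theorem hasMorseIndex_sigNeg [FiniteDimensional ℝ E] (Y : E → ℝ) (x : E) :
    HasMorseIndex Y x (sigNeg (hessianQuadraticForm Y x)) := by
  have negDef_iff (W : Submodule ℝ E) : ((-hessianQuadraticForm Y x).restrict W).PosDef ↔
      ∀ v ∈ W, v ≠ 0 → hessianAt Y x v v < 0 := by
    simp [QuadraticMap.PosDef, hessianQuadraticForm]
  obtain ⟨⟨W, hWdim, hW⟩, hmax⟩ := sigNeg_isGreatest (hessianQuadraticForm Y x)
  exact ⟨⟨W, hWdim, (negDef_iff W).1 hW⟩, fun V hV => hmax ⟨V, rfl, (negDef_iff V).2 hV⟩⟩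

theorem radical_hessianQuadraticForm_eq_bot (hY : ContDiffAt ℝ 2 Y x)
    (hnondeg : ∀ v, (∀ w, hessianAt Y x v w = 0) → v = 0) :
    (hessianQuadraticForm Y x).radical = ⊥ := by
  have hsymm : IsSymmSndFDerivAt ℝ Y x := hY.isSymmSndFDerivAt (by simp)
  have : Invertible (2 : ℝ) := invertibleOfNonzero two_ne_zero
  rw [QuadraticMap.radical_eq_ker_polarBilin, Submodule.eq_bot_iff]
  refine fun v hv => hnondeg v fun w => ?_
  have hpolar : hessianAt Y x v w + hessianAt Y x w v = 0 := by
    simpa [hessianQuadraticForm, LinearMap.BilinMap.polar_toQuadraticMap]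
      using LinearMap.congr_fun (LinearMap.mem_ker.1 hv) w
  have hsymm_vw : hessianAt Y x v w = hessianAt Y x w v := hsymm v w
  linarith

end Hessian

section QuadraticForm

theorem exists_isCompl_negDef_posDef {K V : Type*} [Field K] [LinearOrder K] [IsStrictOrderedRing K]
    [AddCommGroup V] [Module K V] [FiniteDimensional K V] {Q : QuadraticForm K V}
    (hQ : Q.radical = ⊥) :
    ∃ N Z : Submodule K V, IsCompl N Z ∧ Module.finrank K N = sigNeg Q ∧
      ((-Q).restrict N).PosDef ∧ (Q.restrict Z).PosDef := by
  obtain ⟨N, hNdim, hN⟩ := exists_finrank_eq_sigNeg_and_negDef Q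
  obtain ⟨Z, hZdim, hZ⟩ := exists_finrank_eq_sigPos_and_posDef Q
  have hdisjoint : Disjoint N Z := Submodule.disjoint_def.2 fun v hvN hvZ => by
    by_contra hv
    have hneg : 0 < -Q v := hN ⟨v, hvN⟩ (by simpa using hv)
    have hpos : 0 < Q v := hZ ⟨v, hvZ⟩ (by simpa using hv)
    linarith
  have hdim : Module.finrank K N + Module.finrank K Z = Module.finrank K V := by
    have hsum := QuadraticForm.sigPos_add_sigNeg_add_radical (Q := Q)
    rw [hQ, finrank_bot] at hsum
    omega
  exact ⟨N, Z, (Submodule.isCompl_iff_disjoint _ _ hdim.ge).2 hdisjoint, hNdim, hN, hZ⟩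

theorem eventually_posDef_restrict {E : Type*} [NormedAddCommGroup E] [NormedSpace ℝ E]
    (W : Submodule ℝ E) [FiniteDimensional ℝ W] {B : E →L[ℝ] E →L[ℝ] ℝ}
    (hB : (B.toBilinForm.toQuadraticMap.restrict W).PosDef) :
    ∀ᶠ B' in 𝓝 B, (B'.toBilinForm.toQuadraticMap.restrict W).PosDef := by
  have hcont : Continuous fun p : (E →L[ℝ] E →L[ℝ] ℝ) × W => p.1 p.2 p.2 := by fun_prop
  have hsphere : ∀ᶠ B' in 𝓝 B, ∀ u ∈ sphere (0 : W) 1, 0 < B' u u := by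
    refine (isCompact_sphere (0 : W) 1).eventually_forall_of_forall_eventually fun u hu => ?_
    exact continuous_const.continuousAt.eventually_lt hcont.continuousAt
      (hB u (ne_zero_of_mem_unit_sphere ⟨u, hu⟩))
  filter_upwards [hsphere] with B' hB' w hw
  have hnorm : 0 < ‖w‖ := norm_pos_iff.2 hw
  have hunit : 0 < B' (‖w‖⁻¹ • w : W) (‖w‖⁻¹ • w : W) :=
    hB' _ (by rw [mem_sphere_zero_iff_norm, norm_smul, norm_inv, norm_norm,
      inv_mul_cancel₀ hnorm.ne'])
  have hscale : B' (‖w‖⁻¹ • w : W) (‖w‖⁻¹ • w : W) = (‖w‖⁻¹ * ‖w‖⁻¹) * B' w w := by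
    simp [mul_assoc]
  exact pos_of_mul_pos_right (hscale ▸ hunit) (by positivity)

end QuadraticForm

section StrictConvexity

theorem strictConvexOn_comp_affineMap {𝕜 E F β : Type*} [Field 𝕜] [LinearOrder 𝕜]
    [AddCommGroup E] [Module 𝕜 E] [AddCommGroup F] [Module 𝕜 F]
    [AddCommMonoid β] [PartialOrder β] [SMul 𝕜 β] {f : E → β} {s : Set E}
    (hf : StrictConvexOn 𝕜 s f) {g : F →ᵃ[𝕜] E} (hg : Function.Injective g) :
    StrictConvexOn 𝕜 (g ⁻¹' s) (f ∘ g) := by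
  refine ⟨hf.1.affine_preimage g, fun v hv w hw hne a b ha hb hab => ?_⟩
  simpa only [Function.comp_apply, Convex.combo_affine_apply hab]
    using hf.2 hv hw (hg.ne hne) ha hb hab

variable {E : Type*} [NormedAddCommGroup E] [NormedSpace ℝ E] {Y : E → ℝ}

theorem hasDerivAt_comp_lineMap {x y : E} {t : ℝ}
    (hY : DifferentiableAt ℝ Y (AffineMap.lineMap x y t)) :
    HasDerivAt (Y ∘ (AffineMap.lineMap x y : ℝ →ᵃ[ℝ] E))
      (fderiv ℝ Y (AffineMap.lineMap x y t) (y - x)) t :=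
  hY.hasFDerivAt.comp_hasDerivAt t AffineMap.hasDerivAt_lineMap

theorem deriv2_comp_lineMap {x y : E} {t : ℝ}
    (hY : ContDiffAt ℝ 2 Y (AffineMap.lineMap x y t)) :
    deriv^[2] (Y ∘ (AffineMap.lineMap x y : ℝ →ᵃ[ℝ] E)) t =
      hessianAt Y (AffineMap.lineMap x y t) (y - x) (y - x) := by
  let γ : ℝ →ᵃ[ℝ] E := AffineMap.lineMap x y
  have hγ : HasDerivAt γ (y - x) t := AffineMap.hasDerivAt_lineMap
  have hfirst : deriv (Y ∘ γ) =ᶠ[𝓝 t] fun s => fderiv ℝ Y (γ s) (y - x) := by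
    filter_upwards [hγ.continuousAt.eventually (hY.eventually (by simp))] with s hs
    exact (hasDerivAt_comp_lineMap (hs.differentiableAt (by simp))).deriv
  have hderiv : DifferentiableAt ℝ (fderiv ℝ Y) (γ t) :=
    (hY.fderiv_right (m := 1) le_rfl).differentiableAt (by simp)
  have hsecond : HasDerivAt (fun s => fderiv ℝ Y (γ s) (y - x))
      (hessianAt Y (γ t) (y - x) (y - x)) t :=
    (ContinuousLinearMap.apply ℝ ℝ (y - x)).hasFDerivAt.comp_hasDerivAt t
      (hderiv.hasFDerivAt.comp_hasDerivAt t hγ)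
  exact hfirst.deriv_eq.trans hsecond.deriv

theorem strictConvexOn_comp_lineMap {x y : E}
    (hY : ∀ z ∈ segment ℝ x y, ContDiffAt ℝ 2 Y z)
    (hpos : ∀ z ∈ segment ℝ x y, 0 < hessianAt Y z (y - x) (y - x)) :
    StrictConvexOn ℝ (Icc 0 1) (Y ∘ (AffineMap.lineMap x y : ℝ →ᵃ[ℝ] E)) := by
  have hsegment : ∀ t ∈ Icc (0 : ℝ) 1, AffineMap.lineMap x y t ∈ segment ℝ x y := fun t ht =>
    segment_eq_image_lineMap ℝ x y ▸ mem_image_of_mem _ ht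
  refine strictConvexOn_of_deriv2_pos (convex_Icc 0 1) (fun t ht => ?_) fun t ht => ?_
  · have hdiff := (hY _ (hsegment t ht)).differentiableAt (by simp)
    exact (hasDerivAt_comp_lineMap hdiff).continuousAt.continuousWithinAt
  · have hmem := hsegment t (interior_subset ht)
    exact (hpos _ hmem).trans_eq (deriv2_comp_lineMap (hY _ hmem)).symm

theorem strictConvexOn_of_posDef_hessianQuadraticForm {s : Set E} (hs : Convex ℝ s)
    (W : Submodule ℝ E) (hY : ∀ z ∈ s, ContDiffAt ℝ 2 Y z)
    (hpos : ∀ z ∈ s, ((hessianQuadraticForm Y z).restrict W).PosDef) (p : E) :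
    StrictConvexOn ℝ ((fun w : W => p + w) ⁻¹' s) fun w : W => Y (p + w) := by
  have hdomain : Convex ℝ ((fun w : W => p + w) ⁻¹' s) :=
    (hs.translate_preimage_right p).linear_preimage W.subtype
  refine ⟨hdomain, ?_⟩
  intro v hv w hw hne a b ha hb hab
  have hsub : segment ℝ (p + v : E) (p + w) ⊆ s := hs.segment_subset hv hw
  have hconv := strictConvexOn_comp_lineMap (fun z hz => hY z (hsub hz)) fun z hz => by
    simpa [hessianQuadraticForm] using hpos z (hsub hz) (w - v) (sub_ne_zero.2 hne.symm)
  have hlt := hconv.2 (left_mem_Icc.2 zero_le_one) (right_mem_Icc.2 zero_le_one) zero_ne_one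
    ha hb hab
  have hpt : AffineMap.lineMap (p + v : E) (p + w) b = p + (a • v + b • w : W) := by
    obtain rfl : a = 1 - b := eq_sub_of_add_eq hab
    rw [AffineMap.lineMap_apply_module]
    push_cast
    module
  simpa [hpt] using hlt

theorem exists_ball_strictConvexOn {x : E} (hY : ContDiffAt ℝ 2 Y x) (W : Submodule ℝ E)
    [FiniteDimensional ℝ W] (hpos : ((hessianQuadraticForm Y x).restrict W).PosDef) :
    ∃ r > 0, ∀ p : E,
      StrictConvexOn ℝ ((fun w : W => p + w) ⁻¹' ball x r) fun w : W => Y (p + w) := by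
  have hnear := (hY.eventually (by simp)).and
    ((continuousAt_hessianAt hY).eventually (eventually_posDef_restrict W hpos))
  obtain ⟨r, hr, hball⟩ := Metric.eventually_nhds_iff_ball.1 hnear
  exact ⟨r, hr, strictConvexOn_of_posDef_hessianQuadraticForm (convex_ball x r) W
    (fun z hz => (hball z hz).1) fun z hz => (hball z hz).2⟩

theorem lt_of_strictConvexOn_of_hasFDerivAt_zero {s : Set E} {x y : E}
    (hY : StrictConvexOn ℝ s Y) (hcrit : HasFDerivAt Y (0 : E →L[ℝ] ℝ) x) (hx : x ∈ s)
    (hy : y ∈ s) (hne : y ≠ x) : Y x < Y y := by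
  let γ : ℝ →ᵃ[ℝ] E := AffineMap.lineMap x y
  have hγ0 : γ 0 = x := AffineMap.lineMap_apply_zero x y
  have hγ1 : γ 1 = y := AffineMap.lineMap_apply_one x y
  have hconv : StrictConvexOn ℝ (γ ⁻¹' s) (Y ∘ γ) :=
    strictConvexOn_comp_affineMap hY (AffineMap.lineMap_injective ℝ hne.symm)
  rw [← hγ0] at hcrit
  have hderiv : HasDerivAt (Y ∘ γ) 0 0 := hcrit.comp_hasDerivAt 0 AffineMap.hasDerivAt_lineMap
  have hslope : 0 < slope (Y ∘ γ) 0 1 :=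
    hconv.lt_slope_of_hasDerivAt (by simpa [hγ0] using hx) (by simpa [hγ1] using hy)
      zero_lt_one hderiv
  simpa [slope_def_field, hγ0, hγ1] using hslope

theorem eventually_lt_of_posDef_hessianQuadraticForm {x : E} (hY : ContDiffAt ℝ 2 Y x)
    (hcrit : fderiv ℝ Y x = 0) (W : Submodule ℝ E) [FiniteDimensional ℝ W]
    (hpos : ((hessianQuadraticForm Y x).restrict W).PosDef) :
    ∀ᶠ w : W in 𝓝[≠] 0, Y x < Y (x + w) := by
  obtain ⟨r, hr, hconv⟩ := exists_ball_strictConvexOn hY W hpos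
  have hderiv : HasFDerivAt (fun w : W => Y (x + w)) (0 : W →L[ℝ] ℝ) 0 := by
    have hYx : HasFDerivAt Y (0 : E →L[ℝ] ℝ) (x + W.subtypeL 0) := by
      simpa [hcrit] using (hY.differentiableAt (by simp)).hasFDerivAt
    exact hYx.comp 0 (W.subtypeL.hasFDerivAt.const_add x)
  rw [eventually_nhdsWithin_iff]
  filter_upwards [ball_mem_nhds 0 hr] with w hw hw0
  simpa using lt_of_strictConvexOn_of_hasFDerivAt_zero (hconv x) hderiv
    (by simpa using hr) (by simpa using hw) hw0

end StrictConvexity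

section Critical

variable {E : Type*} [NormedAddCommGroup E] [NormedSpace ℝ E] [FiniteDimensional ℝ E] {Y : E → ℝ}
  {X : E}

theorem locallyPreconnectedBelow_of_negDef_of_posDef {N Z : Submodule ℝ E} (hNZ : IsCompl N Z)
    (hY : ContDiffAt ℝ 2 Y X) (hcrit : fderiv ℝ Y X = 0) (hdim : Module.finrank ℝ N ≠ 1)
    (hN : ((-hessianQuadraticForm Y X).restrict N).PosDef)
    (hZ : ((hessianQuadraticForm Y X).restrict Z).PosDef) : LocallyPreconnectedBelow Y X := by
  let ψ : N × Z ≃ₜ E := (N.prodEquivOfIsCompl Z hNZ).toContinuousLinearEquiv.toHomeomorph.trans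
    (Homeomorph.addLeft X)
  have hψ (a : N) (b : Z) : ψ (a, b) = X + (a + b) := rfl
  have hψX : ψ.symm X = (0, 0) := ψ.symm_apply_eq.2 (by simp [hψ])
  refine .of_comp_symm ψ.symm.toOpenPartialHomeomorph (mem_univ X) ?_
  change LocallyPreconnectedBelow (Y ∘ ψ) (ψ.symm X)
  rw [hψX]
  have hmin : ∀ᶠ b : Z in 𝓝[≠] 0, Y X < Y (X + b) :=
    eventually_lt_of_posDef_hessianQuadraticForm hY hcrit Z hZ
  have hmax : ∀ᶠ a : N in 𝓝[≠] 0, (-Y) X < (-Y) (X + a) :=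
    eventually_lt_of_posDef_hessianQuadraticForm (Y := -Y) hY.neg
      (by rw [fderiv_neg, hcrit, neg_zero]) N (by rwa [hessianQuadraticForm_neg])
  obtain ⟨r, hr, hconv⟩ := exists_ball_strictConvexOn hY Z hZ
  have hslice : ∀ a ∈ ball (0 : N) (r / 2),
      QuasiconvexOn ℝ (ball (0 : Z) (r / 2)) fun b => (Y ∘ ψ) (a, b) := fun a ha => by
    have hsub : ball (0 : Z) (r / 2) ⊆ (fun b : Z => X + a + b) ⁻¹' ball X r := fun b hb => by
      rw [mem_ball_zero_iff] at ha hb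
      have hab : ‖(a + b : E)‖ < r :=
        (norm_add_le _ _).trans_lt (add_halves r ▸ add_lt_add ha hb)
      simpa [add_assoc] using hab
    simpa only [Function.comp_apply, hψ, add_assoc]
      using ((hconv (X + a)).convexOn.subset hsub (convex_ball _ _)).quasiconvexOn
  refine locallyPreconnectedBelow_of_saddle (Module.rank_eq_one_iff_finrank_eq_one.not.2 hdim)
    (ball_mem_nhds 0 (half_pos hr)) (ball_mem_nhds 0 (half_pos hr)) hslice ?_ ?_
  · simpa [hψ] using hmax
  · filter_upwards [eventually_nhdsWithin_iff.1 hmin] with b hb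
    obtain rfl | hb0 := eq_or_ne b 0
    · exact le_rfl
    · simpa [hψ] using (hb hb0).le

theorem locallyPreconnectedBelow_of_sigNeg_ne_one (hY : ContDiffAt ℝ 2 Y X)
    (hcrit : IsNondegenerateCriticalPt Y X) (hindex : sigNeg (hessianQuadraticForm Y X) ≠ 1) :
    LocallyPreconnectedBelow Y X := by
  obtain ⟨N, Z, hNZ, hdim, hN, hZ⟩ :=
    exists_isCompl_negDef_posDef (radical_hessianQuadraticForm_eq_bot hY hcrit.2)
  exact locallyPreconnectedBelow_of_negDef_of_posDef hNZ hY hcrit.1 (hdim ▸ hindex) hN hZ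

end Critical

theorem stmt_5_general {E : Type*} [NormedAddCommGroup E] [NormedSpace ℝ E]
    [FiniteDimensional ℝ E] {Y : E → ℝ} {X : E} (hY : ContDiffAt ℝ 2 Y X)
    (hnondeg : fderiv ℝ Y X = 0 → ∀ v, (∀ w, hessianAt Y X v w = 0) → v = 0)
    {V : Set E} (hV : V ∈ 𝓝 X)
    (hdisc : ∀ U ∈ 𝓝 X, U ⊆ V → ¬ IsPreconnected (U ∩ {y | Y y < Y X})) :
    IsNondegenerateCriticalPt Y X ∧ HasMorseIndex Y X 1 := by
  have hnot : ¬ LocallyPreconnectedBelow Y X := fun h =>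
    let ⟨U, hU, hUV, hconn⟩ := h V hV
    hdisc U hU hUV hconn
  have hcrit : fderiv ℝ Y X = 0 := by
    by_contra hne
    exact hnot (locallyPreconnectedBelow_of_hasStrictFDerivAt_ne_zero
      (hY.hasStrictFDerivAt (by simp)) hne)
  have hX : IsNondegenerateCriticalPt Y X := ⟨hcrit, hnondeg hcrit⟩
  have hindex : sigNeg (hessianQuadraticForm Y X) = 1 := by
    by_contra hne
    exact hnot (locallyPreconnectedBelow_of_sigNeg_ne_one hY hX hne)
  exact ⟨hX, hindex ▸ hasMorseIndex_sigNeg Y X⟩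

/-- Let `Y : ℝ^{d'} → ℝ` be smooth with all critical points nondegenerate.
If there exists `r₀ > 0` such that for every neighborhood `U` of `X` contained in `B(X, r₀)`
the set `U ∩ {Y < Y(X)}` is not connected, then `X` is a nondegenerate critical point of `Y`
of index `1`. -/
theorem stmt_5 (d' : ℕ) (hd' : 1 ≤ d')
    (Y : EuclideanSpace ℝ (Fin d') → ℝ) (hY : ContDiff ℝ (⊤ : ℕ∞) Y)
    (hMorse : ∀ x, fderiv ℝ Y x = 0 → ∀ v, (∀ w, hessianAt Y x v w = 0) → v = 0)
    (X : EuclideanSpace ℝ (Fin d'))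
    (r₀ : ℝ) (hr₀ : 0 < r₀)
    (hdisc : ∀ U : Set (EuclideanSpace ℝ (Fin d')),
      U ∈ nhds X → U ⊆ Metric.ball X r₀ → ¬ IsPreconnected (U ∩ {y | Y y < Y X})) :
    IsNondegenerateCriticalPt Y X ∧ HasMorseIndex Y X 1 :=
  stmt_5_general (contDiff_infty.1 hY 2).contDiffAt (hMorse X)
    (Metric.ball_mem_nhds X hr₀) hdisc
end
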